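/- In the setting of stopping rules for a finite-state discrete-time Markov chain [see context], let K^c : {0,…,N} → ℝ and F ∈ ℝ, and define the reward g : {0,…,N} → ℝ by g(n) := K^c(n) for n < N and g(N) := min(F, K^c(N)). Define V : {0,…,N} × {1,…,m} → ℝ backward by V(N, x) := min(F, K^c(N)) and V(n, x) := min( K^c(n), ∑_{y=1}^{m} (P_{n+1})_{x,y} · γ_y · V(n+1, y) ) for 0 ≤ n < N. Then V(0, j) is the least element of the set { Val(τ) : τ an adapted stopping rule }: V(0, j) ≤ Val(τ) for every adapted stopping rule τ, and there exists an adapted stopping rule τ* with Val(τ*) = V(0, j). -/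

import Mathlib

/-!
An adapted rule on `N + 1` steps either stops at time `0` on every path, or never does. In the
second case it is an independent choice, for each first state `y`, of an adapted rule on the
remaining `N` steps, and its value is a combination, with nonnegative coefficients, of the values of
these continuation rules. Hence the least attainable value is the minimum of the immediate reward
and the same combination of the least continuation values, which is the backward recursion.
-/

open Matrix

/-- The path `(w_0, w_1, …, w_N)` started at `j` determined by the choices `(w_1, …, w_N)`. -/
def seqFrom {m N : ℕ} (j : Fin m) (w : Fin N → Fin m) : Fin (N + 1) → Fin m :=
  Fin.cases j w

/-- Probability weight `wt(w) = ∏_{n=1}^N (P_n)_{w_{n−1} w_n}` of the path started at `j`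
with choices `w` (the `n`-th step, 0-indexed `n-1`, uses `P (n-1)`). -/
noncomputable def pathWt {m N : ℕ} (j : Fin m) (P : ℕ → Matrix (Fin m) (Fin m) ℝ)
    (w : Fin N → Fin m) : ℝ :=
  ∏ n : Fin N, P n.val (seqFrom j w n.castSucc) (seqFrom j w n.succ)

/-- A stopping rule `τ` (valued in `{0,…,N}`) is adapted: whether `τ ≤ n` only depends on
the path up to time `n`. -/
def AdaptedRule {m N : ℕ} (τ : (Fin N → Fin m) → ℕ) : Prop :=
  (∀ w, τ w ≤ N) ∧
    ∀ n : ℕ, ∀ w w' : Fin N → Fin m,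
      (∀ i : Fin N, (i : ℕ) < n → w i = w' i) → (τ w ≤ n ↔ τ w' ≤ n)

/-- Discounted expected reward `Val(τ) = ∑_w wt(w) (∏_{i=1}^{τ(w)} γ_{w_i}) g(τ(w))`. -/
noncomputable def ruleValue {m N : ℕ} (j : Fin m) (P : ℕ → Matrix (Fin m) (Fin m) ℝ)
    (γ : Fin m → ℝ) (g : ℕ → ℝ) (τ : (Fin N → Fin m) → ℕ) : ℝ :=
  ∑ w : Fin N → Fin m,
    pathWt j P w * (∏ i : Fin N, if (i : ℕ) < τ w then γ (w i) else 1) * g (τ w)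

/-- Backward recursion for the callable bond: `snellCall q x = V(N − q, x)`, i.e.
`V(N, x) = min(F, K^c(N))` and
`V(n, x) = min(K^c(n), ∑_y (P_{n+1})_{x,y} γ_y V(n+1, y))` for `n < N`
(0-indexed, the matrix used in the step from time `n` is `P n`). -/
noncomputable def snellCall {m : ℕ} (N : ℕ) (P : ℕ → Matrix (Fin m) (Fin m) ℝ)
    (γ : Fin m → ℝ) (Kc : ℕ → ℝ) (F : ℝ) : ℕ → Fin m → ℝ
  | 0, _ => min F (Kc N)
  | q + 1, x =>
      min (Kc (N - (q + 1)))
        (∑ y : Fin m, P (N - (q + 1)) x y * γ y * snellCall N P γ Kc F q y)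

theorem isLeast_univ_pi {ι : Type*} {α : ι → Type*} [∀ i, Preorder (α i)] {s : ∀ i, Set (α i)}
    {a : ∀ i, α i} (h : ∀ i, IsLeast (s i) (a i)) : IsLeast (Set.univ.pi s) a :=
  ⟨fun i _ => (h i).1, fun _ hb i => (h i).2 (hb i trivial)⟩

theorem sum_pi_fin_succ {N : ℕ} {α M : Type*} [Fintype α] [AddCommMonoid M]
    (f : (Fin (N + 1) → α) → M) :
    ∑ w, f w = ∑ y, ∑ w : Fin N → α, f (Fin.cons y w) := by
  rw [← (Fin.consEquiv fun _ => α).sum_comp, Fintype.sum_prod_type]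
  rfl

section AdaptedRule

variable {m N : ℕ}

/-- The continuation of `τ` after a first step to `y`, with time counted from that step. The
truncated subtraction makes it stop at once on the paths where `τ` had already stopped at `0`. -/
def continuationRule (τ : (Fin (N + 1) → Fin m) → ℕ) (y : Fin m) (w : Fin N → Fin m) : ℕ :=
  τ (Fin.cons y w) - 1

/-- The rule that takes one step and then follows `σ y`, where `y` is the state reached; inverse to
`continuationRule` on the rules that never stop at time `0`. -/
def stepThenRule (σ : Fin m → (Fin N → Fin m) → ℕ) (w : Fin (N + 1) → Fin m) : ℕ :=
  σ (w 0) (Fin.tail w) + 1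

theorem stepThenRule_continuationRule {τ : (Fin (N + 1) → Fin m) → ℕ} (hτ : ∀ w, τ w ≠ 0) :
    stepThenRule (continuationRule τ) = τ := by
  funext w
  simp only [stepThenRule, continuationRule, Fin.cons_self_tail]
  exact Nat.sub_one_add_one (hτ w)

theorem adaptedRule_zero : AdaptedRule (0 : (Fin N → Fin m) → ℕ) :=
  ⟨fun _ => Nat.zero_le N, fun _ _ _ _ => Iff.rfl⟩

theorem AdaptedRule.eq_zero_or_forall_ne_zero {τ : (Fin N → Fin m) → ℕ} (hτ : AdaptedRule τ) :
    τ = 0 ∨ ∀ w, τ w ≠ 0 := by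
  by_contra! ⟨hne, w₀, hw₀⟩
  refine hne (funext fun w => Nat.le_zero.mp ?_)
  exact (hτ.2 0 w₀ w fun i hi => absurd hi (Nat.not_lt_zero i)).mp hw₀.le

theorem adaptedRule_continuationRule {τ : (Fin (N + 1) → Fin m) → ℕ} (hτ : AdaptedRule τ)
    (y : Fin m) : AdaptedRule (continuationRule τ y) := by
  refine ⟨fun w => Nat.sub_le_of_le_add (hτ.1 _), fun n w w' hw => ?_⟩
  have agree (i : Fin (N + 1)) (hi : (i : ℕ) < n + 1) :
      (Fin.cons y w : Fin (N + 1) → Fin m) i = (Fin.cons y w' : Fin (N + 1) → Fin m) i := by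
    cases i using Fin.cases with
    | zero => rfl
    | succ i => exact hw i (Nat.lt_of_succ_lt_succ hi)
  simpa only [continuationRule, Nat.sub_le_iff_le_add] using hτ.2 (n + 1) _ _ agree

theorem adaptedRule_stepThenRule {σ : Fin m → (Fin N → Fin m) → ℕ}
    (hσ : ∀ y, AdaptedRule (σ y)) : AdaptedRule (stepThenRule σ) := by
  refine ⟨fun w => Nat.succ_le_succ ((hσ (w 0)).1 _), fun n w w' hw => ?_⟩
  cases n with
  | zero => simp [stepThenRule]
  | succ n =>
    have first_eq : w 0 = w' 0 := hw 0 n.succ_pos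
    simp only [stepThenRule, Nat.add_le_add_iff_right, first_eq]
    exact (hσ (w' 0)).2 n _ _ fun i hi => hw i.succ (Nat.succ_lt_succ hi)

theorem adaptedRule_zero_steps_iff {τ : (Fin 0 → Fin m) → ℕ} : AdaptedRule τ ↔ τ = 0 :=
  ⟨fun hτ => funext fun w => Nat.le_zero.mp (hτ.1 w), fun h => h ▸ adaptedRule_zero⟩

theorem adaptedRule_succ_steps_iff {τ : (Fin (N + 1) → Fin m) → ℕ} :
    AdaptedRule τ ↔ τ = 0 ∨ ∃ σ, (∀ y, AdaptedRule (σ y)) ∧ stepThenRule σ = τ := by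
  constructor
  · intro hτ
    refine hτ.eq_zero_or_forall_ne_zero.imp_right fun hne => ?_
    exact ⟨_, adaptedRule_continuationRule hτ, stepThenRule_continuationRule hne⟩
  · rintro (rfl | ⟨σ, hσ, rfl⟩)
    · exact adaptedRule_zero
    · exact adaptedRule_stepThenRule hσ

end AdaptedRule

section Value

variable {m N : ℕ} {P : ℕ → Matrix (Fin m) (Fin m) ℝ}

theorem pathWt_cons (j y : Fin m) (P : ℕ → Matrix (Fin m) (Fin m) ℝ) (w : Fin N → Fin m) :
    pathWt j P (Fin.cons y w : Fin (N + 1) → Fin m) =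
      P 0 j y * pathWt y (fun n => P (n + 1)) w :=
  Fin.prod_univ_succ _

theorem sum_pathWt (hProw : ∀ n < N, ∀ x, ∑ y, P n x y = 1) (j : Fin m) :
    ∑ w : Fin N → Fin m, pathWt j P w = 1 := by
  induction N generalizing j P with
  | zero => simp [pathWt]
  | succ N ih =>
    have tail_sum (y : Fin m) : ∑ w : Fin N → Fin m, pathWt y (fun n => P (n + 1)) w = 1 :=
      ih (fun n hn => hProw (n + 1) (Nat.succ_lt_succ hn)) y
    simp only [sum_pi_fin_succ, pathWt_cons, ← Finset.mul_sum, tail_sum, mul_one]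
    exact hProw 0 N.succ_pos j

theorem ruleValue_zero (hProw : ∀ n < N, ∀ x, ∑ y, P n x y = 1) (j : Fin m)
    (γ : Fin m → ℝ) (g : ℕ → ℝ) : ruleValue j P γ g (0 : (Fin N → Fin m) → ℕ) = g 0 := by
  simp [ruleValue, ← Finset.sum_mul, sum_pathWt hProw]

theorem ruleValue_stepThenRule (j : Fin m) (P : ℕ → Matrix (Fin m) (Fin m) ℝ) (γ : Fin m → ℝ)
    (g : ℕ → ℝ) (σ : Fin m → (Fin N → Fin m) → ℕ) :
    ruleValue j P γ g (stepThenRule σ) = ∑ y, P 0 j y * γ y *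
      ruleValue y (fun n => P (n + 1)) γ (fun n => g (n + 1)) (σ y) := by
  simp only [ruleValue, sum_pi_fin_succ, Finset.mul_sum]
  refine Finset.sum_congr rfl fun y _ => Finset.sum_congr rfl fun w _ => ?_
  simp only [stepThenRule, Fin.cons_zero, Fin.tail_cons, pathWt_cons, Fin.prod_univ_succ,
    Fin.cons_succ, Fin.val_zero, Fin.val_succ, Nat.add_lt_add_iff_right, Nat.succ_pos, if_true]
  ring

/-- The set `{Val(τ) : τ an adapted stopping rule}` of attainable expected rewards. -/
def adaptedValues (N : ℕ) (j : Fin m) (P : ℕ → Matrix (Fin m) (Fin m) ℝ) (γ : Fin m → ℝ)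
    (g : ℕ → ℝ) : Set ℝ :=
  ruleValue j P γ g '' {τ : (Fin N → Fin m) → ℕ | AdaptedRule τ}

theorem adaptedValues_zero (j : Fin m) (P : ℕ → Matrix (Fin m) (Fin m) ℝ) (γ : Fin m → ℝ)
    (g : ℕ → ℝ) : adaptedValues 0 j P γ g = {g 0} := by
  simp [adaptedValues, adaptedRule_zero_steps_iff, ruleValue_zero]

theorem adaptedValues_succ (hProw : ∀ n < N + 1, ∀ x, ∑ y, P n x y = 1) (j : Fin m)
    (γ : Fin m → ℝ) (g : ℕ → ℝ) :
    adaptedValues (N + 1) j P γ g =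
      insert (g 0) ((fun v : Fin m → ℝ => ∑ y, P 0 j y * γ y * v y) ''
        Set.univ.pi fun y => adaptedValues N y (fun n => P (n + 1)) γ fun n => g (n + 1)) := by
  ext v
  constructor
  · rintro ⟨τ, hτ, rfl⟩
    obtain rfl | ⟨σ, hσ, rfl⟩ := adaptedRule_succ_steps_iff.mp hτ
    · exact .inl (ruleValue_zero hProw j γ g)
    · exact .inr ⟨_, fun y _ => Set.mem_image_of_mem _ (hσ y),
        (ruleValue_stepThenRule j P γ g σ).symm⟩
  · rintro (rfl | ⟨v, hv, rfl⟩)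
    · exact ⟨0, adaptedRule_zero, ruleValue_zero hProw j γ g⟩
    · choose σ hσ hval using fun y => hv y trivial
      refine ⟨stepThenRule σ, adaptedRule_stepThenRule hσ, ?_⟩
      simp only [ruleValue_stepThenRule, hval]

end Value

section Optimality

variable {m N : ℕ} {P : ℕ → Matrix (Fin m) (Fin m) ℝ} {γ : Fin m → ℝ} {g : ℕ → ℝ}

/-- `V` is the lower Snell envelope of the reward `g`, i.e. the solution `V n x` of the dynamic
programming equations for minimal stopping up to the horizon `N`. It is specified by its equations
so that a shift in time is again an instance. -/
structure IsLowerSnellEnvelope (N : ℕ) (P : ℕ → Matrix (Fin m) (Fin m) ℝ) (γ : Fin m → ℝ)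
    (g : ℕ → ℝ) (V : ℕ → Fin m → ℝ) : Prop where
  terminal : ∀ x, V N x = g N
  step : ∀ n < N, ∀ x, V n x = min (g n) (∑ y, P n x y * γ y * V (n + 1) y)

theorem IsLowerSnellEnvelope.shift {V : ℕ → Fin m → ℝ}
    (hV : IsLowerSnellEnvelope (N + 1) P γ g V) :
    IsLowerSnellEnvelope N (fun n => P (n + 1)) γ (fun n => g (n + 1)) fun n => V (n + 1) where
  terminal := hV.terminal
  step n hn := hV.step (n + 1) (Nat.succ_lt_succ hn)

theorem IsLowerSnellEnvelope.isLeast_adaptedValues {V : ℕ → Fin m → ℝ}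
    (hV : IsLowerSnellEnvelope N P γ g V) (hPnn : ∀ n < N, ∀ x y, 0 ≤ P n x y)
    (hProw : ∀ n < N, ∀ x, ∑ y, P n x y = 1) (hγ : ∀ i, 0 ≤ γ i) (j : Fin m) :
    IsLeast (adaptedValues N j P γ g) (V 0 j) := by
  induction N generalizing P g V j with
  | zero =>
    rw [adaptedValues_zero, hV.terminal]
    exact isLeast_singleton
  | succ N ih =>
    rw [adaptedValues_succ hProw, hV.step 0 N.succ_pos]
    have least_continuation (y : Fin m) := ih hV.shift
      (fun n hn => hPnn (n + 1) (Nat.succ_lt_succ hn))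
      (fun n hn => hProw (n + 1) (Nat.succ_lt_succ hn)) y
    have monotone_step : Monotone fun v : Fin m → ℝ => ∑ y, P 0 j y * γ y * v y :=
      fun _ _ hvw => dotProduct_le_dotProduct_of_nonneg_left hvw fun y =>
        mul_nonneg (hPnn 0 N.succ_pos j y) (hγ y)
    exact (monotone_step.map_isLeast (isLeast_univ_pi least_continuation)).insert (g 0)

theorem isLowerSnellEnvelope_snellCall (N : ℕ) (P : ℕ → Matrix (Fin m) (Fin m) ℝ)
    (γ : Fin m → ℝ) (Kc : ℕ → ℝ) (F : ℝ) :
    IsLowerSnellEnvelope N P γ (fun n => if n < N then Kc n else min F (Kc N))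
      fun n => snellCall N P γ Kc F (N - n) where
  terminal x := by simp [snellCall]
  step n hn x := by
    obtain ⟨q, rfl⟩ := Nat.exists_eq_add_of_lt hn
    have time_left : n + q + 1 - n = q + 1 := by omega
    have time_left_succ : n + q + 1 - (n + 1) = q := by omega
    have time_elapsed : n + q + 1 - (q + 1) = n := by omega
    simp only [hn, if_true, time_left, time_left_succ, snellCall, time_elapsed]

end Optimality

/-- **Proposition 4, callable bond (discrete optimal stopping).**
With reward `g(n) = K^c(n)` for `n < N` and `g(N) = min(F, K^c(N))`, the value `V(0, j)`
of the backward recursion is the least element of `{Val(τ) : τ adapted stopping rule}`: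
every adapted rule has value `≥ V(0, j)`, and some adapted rule attains it. -/
theorem callable_bond_optimal_stopping (m N : ℕ) (hm : 1 ≤ m) (hN : 1 ≤ N) (j : Fin m)
    (P : ℕ → Matrix (Fin m) (Fin m) ℝ)
    (hPnn : ∀ n < N, ∀ x y : Fin m, 0 ≤ P n x y)
    (hProw : ∀ n < N, ∀ x : Fin m, ∑ y : Fin m, P n x y = 1)
    (γ : Fin m → ℝ) (hγ : ∀ i, 0 ≤ γ i)
    (Kc : ℕ → ℝ) (F : ℝ)
    (g : ℕ → ℝ) (hg : ∀ n, g n = if n < N then Kc n else min F (Kc N)) :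
    (∀ τ : (Fin N → Fin m) → ℕ, AdaptedRule τ →
        snellCall N P γ Kc F N j ≤ ruleValue j P γ g τ) ∧
      (∃ τ : (Fin N → Fin m) → ℕ, AdaptedRule τ ∧
        ruleValue j P γ g τ = snellCall N P γ Kc F N j) := by
  obtain rfl : g = fun n => if n < N then Kc n else min F (Kc N) := funext hg
  obtain ⟨⟨τ, hτ, hval⟩, hlower⟩ :=
    (isLowerSnellEnvelope_snellCall N P γ Kc F).isLeast_adaptedValues hPnn hProw hγ j
  exact ⟨fun σ hσ => hlower (Set.mem_image_of_mem _ hσ), τ, hτ, hval⟩
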